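/- Coercivity of the innovations loss (Expanded Coercivity Lemma, part 2). Assume the pair (A, C A) is observable. Let (L_j) be a sequence of real n×p matrices such that for each j every complex eigenvalue of F(L_j) := (I − L_j C) A has modulus < 1, and let P_j be a symmetric positive semidefinite real n×n matrix satisfying P_j = F(L_j) P_j F(L_j)^T + Q_η(L_j). Define J_innov(L_j) := Tr(C A P_j A^T C^T) + Tr(C Q_w C^T) + Tr(R_v). If either ‖L_j‖_F → ∞ or the spectral radius of F(L_j) (the maximum modulus of its complex eigenvalues) tends to 1, then J_innov(L_j) → ∞. -/

import Mathlib

/-!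
Write `G = C A` and `F = F(L) = A - L G`, and let `q_P(x) = xᵀ P x`. The Lyapunov equation reads
`q_P(x) = q_P(Fᵀ x) + q_{Qw}((I - L C)ᵀ x) + q_{Rv}(Lᵀ x)`, so `q_P(Fᵀ x) ≤ q_P(x)` and
`r ‖Lᵀ x‖² ≤ q_P(x)` for some `r > 0` depending only on `Rv`.

Suppose the loss stays bounded along infinitely many indices. Then `q_P` is bounded on the rows of
`G` along these indices, because `Tr(G P Gᵀ)` is the sum of its values there. The vectors `x` on
which `q_P` is bounded form a subspace, and it is stable under `Aᵀ` since
`Aᵀ x = Fᵀ x + Gᵀ (Lᵀ x)` with `Lᵀ x` bounded. By observability this subspace is everything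
(`bounded_of_observable`), hence `q_P(x) ≤ K ‖x‖²` uniformly.

The bound `r ‖Lᵀ x‖² ≤ q_P(x)` then bounds `L`. Moreover `Q_η(L) ≥ c I` with `c > 0` independent
of `L` (`exists_noise_lower_bound`), so evaluating the Lyapunov equation on an eigenvector of `Fᵀ`
gives `|μ|² ≤ 1 - c / K` for each eigenvalue `μ` (`norm_sq_le_of_mem_spectrum`), which keeps the
spectral radius away from `1`. Both alternatives of the blow-up hypothesis are thus excluded.

Vectors `Fin n → ℝ` carry the sup norm; only equivalence of norms matters for the constants.
-/

open Matrix Filter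

/-- The Frobenius norm of a real matrix. -/
noncomputable def frobNorm {m p : ℕ} (M : Matrix (Fin m) (Fin p) ℝ) : ℝ :=
  Real.sqrt (∑ i, ∑ j, (M i j) ^ 2)


/-- The quadratic form `x ↦ xᵀ P x` of a real square matrix. -/
def quadForm {n : ℕ} (P : Matrix (Fin n) (Fin n) ℝ) (x : Fin n → ℝ) : ℝ := x ⬝ᵥ P *ᵥ x

lemma quadForm_nonneg {n : ℕ} {P : Matrix (Fin n) (Fin n) ℝ} (hP : P.PosSemidef)
    (x : Fin n → ℝ) : 0 ≤ quadForm P x := by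
  simpa [quadForm] using hP.dotProduct_mulVec_nonneg x

lemma quadForm_smul {n : ℕ} (P : Matrix (Fin n) (Fin n) ℝ) (a : ℝ) (x : Fin n → ℝ) :
    quadForm P (a • x) = a ^ 2 * quadForm P x := by
  simp [quadForm, mulVec_smul]; ring

lemma quadForm_zero {n : ℕ} (P : Matrix (Fin n) (Fin n) ℝ) : quadForm P 0 = 0 := by
  simp [quadForm]

lemma quadForm_add_matrix {n : ℕ} (P Q : Matrix (Fin n) (Fin n) ℝ) (x : Fin n → ℝ) :
    quadForm (P + Q) x = quadForm P x + quadForm Q x := by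
  simp [quadForm, add_mulVec]

lemma quadForm_conj {n m : ℕ} (M : Matrix (Fin n) (Fin m) ℝ) (P : Matrix (Fin m) (Fin m) ℝ)
    (x : Fin n → ℝ) : quadForm (M * P * Mᵀ) x = quadForm P (Mᵀ *ᵥ x) := by
  simp only [quadForm, ← mulVec_mulVec]
  rw [dotProduct_mulVec x M, mulVec_transpose]

/-- Rotating and scaling a pair of vectors by the complex number `a + b i` scales the sum of the
values of a quadratic form by its squared modulus. -/
lemma quadForm_rotate {n : ℕ} (P : Matrix (Fin n) (Fin n) ℝ) (x y : Fin n → ℝ) (a b : ℝ) :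
    quadForm P (a • x - b • y) + quadForm P (b • x + a • y)
      = (a ^ 2 + b ^ 2) * (quadForm P x + quadForm P y) := by
  simp [quadForm, mulVec_add, mulVec_sub, mulVec_smul]
  ring

lemma quadForm_add_le {n : ℕ} {P : Matrix (Fin n) (Fin n) ℝ} (hP : P.PosSemidef)
    (x y : Fin n → ℝ) : quadForm P (x + y) ≤ 2 * quadForm P x + 2 * quadForm P y := by
  have h := quadForm_rotate P x y 1 1
  have h1 := quadForm_nonneg hP ((1 : ℝ) • x - (1 : ℝ) • y)
  simp only [one_smul] at h h1
  linarith

lemma quadForm_sum_le {n : ℕ} {P : Matrix (Fin n) (Fin n) ℝ} (hP : P.PosSemidef)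
    {ι : Type*} (s : Finset ι) (x : ι → Fin n → ℝ) :
    quadForm P (∑ i ∈ s, x i) ≤ 2 ^ s.card * ∑ i ∈ s, quadForm P (x i) := by
  classical
  induction s using Finset.induction_on with
  | empty => simp [quadForm_zero]
  | insert a s ha ih =>
    rw [Finset.sum_insert ha, Finset.sum_insert ha, Finset.card_insert_of_notMem ha]
    have h := quadForm_add_le hP (x a) (∑ i ∈ s, x i)
    have h1 : (1 : ℝ) ≤ 2 ^ s.card := one_le_pow₀ (by norm_num)
    have h2 := quadForm_nonneg hP (x a)
    rw [pow_succ]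
    nlinarith

/-- A linear combination of vectors with values of the quadratic form at most `K`. -/
lemma quadForm_comb_le {n m : ℕ} {P : Matrix (Fin n) (Fin n) ℝ} (hP : P.PosSemidef)
    (g : Fin m → Fin n → ℝ) (y : Fin m → ℝ) {K : ℝ} (hg : ∀ i, quadForm P (g i) ≤ K) :
    quadForm P (∑ i, y i • g i) ≤ 2 ^ m * m * K * ‖y‖ ^ 2 := by
  have h := quadForm_sum_le hP Finset.univ (fun i => y i • g i)
  have h2 : ∑ i, quadForm P (y i • g i) ≤ ∑ _i : Fin m, ‖y‖ ^ 2 * K := by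
    refine Finset.sum_le_sum fun i _ => ?_
    rw [quadForm_smul]
    have h3 : (y i) ^ 2 ≤ ‖y‖ ^ 2 := by
      rw [← sq_abs]
      exact pow_le_pow_left₀ (abs_nonneg _) (norm_le_pi_norm y i) 2
    exact mul_le_mul h3 (hg i) (quadForm_nonneg hP _) (sq_nonneg _)
  simp only [Finset.sum_const, Finset.card_univ, Fintype.card_fin, nsmul_eq_mul] at h h2
  calc _ ≤ _ := h
    _ ≤ 2 ^ m * (m * (‖y‖ ^ 2 * K)) := by gcongr
    _ = _ := by ring

/-- Minimising over the unit sphere: a positive definite form dominates a multiple of the square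
of the norm. -/
lemma exists_lower_bound {n : ℕ} {Q : Matrix (Fin n) (Fin n) ℝ} (hQ : Q.PosDef) :
    ∃ r : ℝ, 0 < r ∧ ∀ x, r * ‖x‖ ^ 2 ≤ quadForm Q x := by
  by_cases hne : (Metric.sphere (0 : Fin n → ℝ) 1).Nonempty
  · have hcont : Continuous (quadForm Q) := by
      unfold quadForm
      fun_prop
    obtain ⟨z, hz, hmin⟩ := (isCompact_sphere (0 : Fin n → ℝ) 1).exists_isMinOn hne
      hcont.continuousOn
    have hz1 : ‖z‖ = 1 := by simpa using hz
    have hz0 : z ≠ 0 := by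
      rintro rfl
      simp at hz1
    refine ⟨quadForm Q z, by simpa [quadForm] using hQ.dotProduct_mulVec_pos hz0, fun x => ?_⟩
    by_cases hx : x = 0
    · simp [hx, quadForm_zero]
    have hx' : ‖x‖ ≠ 0 := by simpa using hx
    have h := hmin (show ‖x‖⁻¹ • x ∈ Metric.sphere (0 : Fin n → ℝ) 1 by
      simp [norm_smul, hx'])
    have h' : quadForm Q z ≤ (‖x‖⁻¹) ^ 2 * quadForm Q x := by
      rw [← quadForm_smul]; exact h
    calc quadForm Q z * ‖x‖ ^ 2 ≤ ((‖x‖⁻¹) ^ 2 * quadForm Q x) * ‖x‖ ^ 2 := by gcongr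
      _ = quadForm Q x := by field_simp
  · refine ⟨1, one_pos, fun x => ?_⟩
    by_cases hx : x = 0
    · simp [hx, quadForm_zero]
    have hx' : ‖x‖ ≠ 0 := by simpa using hx
    exact absurd ⟨‖x‖⁻¹ • x, by simp [norm_smul, hx']⟩ hne

/-- The effective noise covariance is bounded below uniformly in the gain: with `y = Lᵀ x` and
`z = (I - L C)ᵀ x` one has `x = z + Cᵀ y`, so `z` and `y` cannot both be small. -/
lemma exists_noise_lower_bound {n p : ℕ} (C : Matrix (Fin p) (Fin n) ℝ)
    {Qw : Matrix (Fin n) (Fin n) ℝ} (hQw : Qw.PosDef)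
    {Rv : Matrix (Fin p) (Fin p) ℝ} (hRv : Rv.PosDef) :
    ∃ c : ℝ, 0 < c ∧ ∀ (L : Matrix (Fin n) (Fin p) ℝ) (x : Fin n → ℝ),
      c * ‖x‖ ^ 2 ≤ quadForm Qw ((1 - L * C)ᵀ *ᵥ x) + quadForm Rv (Lᵀ *ᵥ x) := by
  obtain ⟨a, ha, hqa⟩ := exists_lower_bound hQw
  obtain ⟨b, hb, hqb⟩ := exists_lower_bound hRv
  set T := LinearMap.toContinuousLinearMap (Matrix.toLin' Cᵀ) with hT
  set t := ‖T‖ with ht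
  have ht0 : 0 ≤ t := norm_nonneg _
  set D := 2 * (a⁻¹ + t ^ 2 * b⁻¹) with hD
  have hDpos : 0 < D := by positivity
  refine ⟨D⁻¹, by positivity, fun L x => ?_⟩
  set y := Lᵀ *ᵥ x with hy
  set z := (1 - L * C)ᵀ *ᵥ x with hz
  have hx : x = z + T y := by
    have : T y = Cᵀ *ᵥ y := by simp [hT]
    rw [this, hz, hy, transpose_sub, sub_mulVec, transpose_mul, mulVec_mulVec]
    simp
  have hn : ‖x‖ ≤ ‖z‖ + t * ‖y‖ := by
    calc ‖x‖ = ‖z + T y‖ := by rw [← hx]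
      _ ≤ ‖z‖ + ‖T y‖ := norm_add_le _ _
      _ ≤ _ := by gcongr; exact T.le_opNorm y
  have hn2 : ‖x‖ ^ 2 ≤ 2 * (‖z‖ ^ 2 + t ^ 2 * ‖y‖ ^ 2) := by
    have := pow_le_pow_left₀ (norm_nonneg x) hn 2
    nlinarith [sq_nonneg (‖z‖ - t * ‖y‖)]
  have h1 := hqa z
  have h2 := hqb y
  have hz0 : 0 ≤ quadForm Qw z := le_trans (by positivity) h1
  have hy0 : 0 ≤ quadForm Rv y := le_trans (by positivity) h2
  have h1' : ‖z‖ ^ 2 ≤ a⁻¹ * quadForm Qw z := by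
    rw [inv_mul_eq_div, le_div_iff₀ ha]; linarith
  have h2' : ‖y‖ ^ 2 ≤ b⁻¹ * quadForm Rv y := by
    rw [inv_mul_eq_div, le_div_iff₀ hb]; linarith
  rw [inv_mul_eq_div, div_le_iff₀ hDpos]
  have h3 : t ^ 2 * ‖y‖ ^ 2 ≤ t ^ 2 * (b⁻¹ * quadForm Rv y) := by gcongr
  have h4 : 0 ≤ a⁻¹ * quadForm Rv y := by positivity
  have h5 : 0 ≤ t ^ 2 * b⁻¹ * quadForm Qw z := by positivity
  rw [hD]
  nlinarith

/-- Real and imaginary parts of an eigenvector of the transpose. -/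
lemma exists_real_eigenpair {n : ℕ} (F : Matrix (Fin n) (Fin n) ℝ) {μ : ℂ}
    (hμ : μ ∈ spectrum ℂ (F.map (fun x => (x : ℂ)))) :
    ∃ a b : Fin n → ℝ, (a ≠ 0 ∨ b ≠ 0) ∧
      Fᵀ *ᵥ a = μ.re • a - μ.im • b ∧ Fᵀ *ᵥ b = μ.im • a + μ.re • b := by
  rw [spectrum.mem_iff, isUnit_iff_isUnit_det, isUnit_iff_ne_zero, not_not,
    ← exists_vecMul_eq_zero_iff] at hμ
  obtain ⟨v, hv0, hv⟩ := hμ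
  have hv' : ∀ i, μ * v i = ∑ k, v k * (F k i : ℂ) := by
    intro i
    have h := congrFun hv i
    rw [vecMul_sub, Pi.sub_apply, Pi.zero_apply, sub_eq_zero] at h
    simpa [vecMul, dotProduct, Matrix.algebraMap_matrix_apply, mul_comm] using h
  refine ⟨fun i => (v i).re, fun i => (v i).im, ?_, ?_, ?_⟩
  · by_contra! h
    exact hv0 (funext fun i => Complex.ext (congrFun h.1 i) (congrFun h.2 i))
  · funext i
    have h := congrArg Complex.re (hv' i)
    simp only [Complex.mul_re, Complex.re_sum, Complex.ofReal_re, Complex.ofReal_im, mul_zero,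
      sub_zero] at h
    simp [mulVec, dotProduct, h, mul_comm]
  · funext i
    have h := congrArg Complex.im (hv' i)
    simp only [Complex.mul_im, Complex.im_sum, Complex.ofReal_re, Complex.ofReal_im, mul_zero,
      zero_add] at h
    simp [mulVec, dotProduct, mul_comm] at h ⊢
    linarith

/-- Evaluating a Lyapunov identity `q_P(x) = q_P(Fᵀ x) + s(x)` on an eigenvector of `Fᵀ`, when
`s ≥ c ‖·‖²` and `q_P ≤ K ‖·‖²`, bounds the eigenvalue away from the unit circle. -/
lemma norm_sq_le_of_mem_spectrum {n : ℕ} {F P : Matrix (Fin n) (Fin n) ℝ} {c K : ℝ}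
    (hK : 0 < K) (s : (Fin n → ℝ) → ℝ)
    (hs : ∀ x, c * ‖x‖ ^ 2 ≤ s x) (hPs : ∀ x, quadForm P x = quadForm P (Fᵀ *ᵥ x) + s x)
    (hPK : ∀ x, quadForm P x ≤ K * ‖x‖ ^ 2) (hc : 0 < c) (hP : P.PosSemidef) {μ : ℂ}
    (hμ : μ ∈ spectrum ℂ (F.map (fun x => (x : ℂ)))) : ‖μ‖ ^ 2 ≤ 1 - c / K := by
  obtain ⟨a, b, hab, ha, hb⟩ := exists_real_eigenpair F hμ
  have hrot := quadForm_rotate P a b μ.re μ.im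
  have e1 := hPs a
  have e2 := hPs b
  rw [ha] at e1
  rw [hb] at e2
  have hN : 0 < ‖a‖ ^ 2 + ‖b‖ ^ 2 := by
    rcases hab with h | h
    · have := norm_pos_iff.2 h; positivity
    · have := norm_pos_iff.2 h; positivity
  have hmod : ‖μ‖ ^ 2 = μ.re ^ 2 + μ.im ^ 2 := by
    rw [Complex.sq_norm, Complex.normSq_apply]; ring
  rw [← hmod] at hrot
  have hS : c * (‖a‖ ^ 2 + ‖b‖ ^ 2) ≤ (1 - ‖μ‖ ^ 2) * (quadForm P a + quadForm P b) := by
    linarith [hs a, hs b]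
  have hQ0 : 0 ≤ quadForm P a + quadForm P b :=
    add_nonneg (quadForm_nonneg hP a) (quadForm_nonneg hP b)
  have hQK : quadForm P a + quadForm P b ≤ K * (‖a‖ ^ 2 + ‖b‖ ^ 2) := by
    linarith [hPK a, hPK b]
  have hpos : 0 < 1 - ‖μ‖ ^ 2 := by
    by_contra! h
    have : (1 - ‖μ‖ ^ 2) * (quadForm P a + quadForm P b) ≤ 0 :=
      mul_nonpos_of_nonpos_of_nonneg h hQ0
    have : 0 < c * (‖a‖ ^ 2 + ‖b‖ ^ 2) := by positivity
    linarith
  have h1 : c * (‖a‖ ^ 2 + ‖b‖ ^ 2) ≤ ((1 - ‖μ‖ ^ 2) * K) * (‖a‖ ^ 2 + ‖b‖ ^ 2) := by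
    calc _ ≤ _ := hS
      _ ≤ (1 - ‖μ‖ ^ 2) * (K * (‖a‖ ^ 2 + ‖b‖ ^ 2)) := by gcongr
      _ = _ := by ring
  have h2 : c ≤ (1 - ‖μ‖ ^ 2) * K := le_of_mul_le_mul_right h1 hN
  have h3 : c / K ≤ 1 - ‖μ‖ ^ 2 := (div_le_iff₀ hK).2 h2
  linarith

/-- The subspace of vectors on which the forms of `P j`, `j ∈ S`, are bounded. -/
def boundedSubmodule {n : ℕ} (P : ℕ → Matrix (Fin n) (Fin n) ℝ) (hP : ∀ j, (P j).PosSemidef)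
    (S : Set ℕ) : Submodule ℝ (Fin n → ℝ) where
  carrier := {x | ∃ K, ∀ j ∈ S, quadForm (P j) x ≤ K}
  zero_mem' := ⟨0, fun j _ => (quadForm_zero _).le⟩
  add_mem' := by
    rintro x y ⟨K, hK⟩ ⟨K', hK'⟩
    exact ⟨2 * K + 2 * K', fun j hj => by
      linarith [quadForm_add_le (hP j) x y, hK j hj, hK' j hj]⟩
  smul_mem' := by
    rintro a x ⟨K, hK⟩
    refine ⟨a ^ 2 * K, fun j hj => ?_⟩
    rw [quadForm_smul]
    exact mul_le_mul_of_nonneg_left (hK j hj) (sq_nonneg a)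

/-- A subspace containing the rows of `G` and stable under `Aᵀ` is everything when `(A, G)` is
observable: a functional vanishing on it would be an unobservable vector. -/
lemma eq_top_of_observable {n p : ℕ} {A : Matrix (Fin n) (Fin n) ℝ}
    {G : Matrix (Fin p) (Fin n) ℝ}
    (hobs : ∀ v : Fin n → ℝ, (∀ k : ℕ, (G * A ^ k).mulVec v = 0) → v = 0)
    (B : Submodule ℝ (Fin n → ℝ)) (hG : ∀ i, G i ∈ B) (hA : ∀ x ∈ B, Aᵀ *ᵥ x ∈ B) : B = ⊤ := by
  by_contra hne
  obtain ⟨f, hf0, hf⟩ := B.exists_le_ker_of_lt_top (lt_top_iff_ne_top.2 hne)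
  have hmem : ∀ (k : ℕ) (i : Fin p), (G * A ^ k : Matrix (Fin p) (Fin n) ℝ) i ∈ B := by
    intro k
    induction k with
    | zero => intro i; simpa using hG i
    | succ k ih =>
      intro i
      have h := hA _ (ih i)
      have e : (G * A ^ (k + 1)) i = Aᵀ *ᵥ ((G * A ^ k) i) := by
        rw [pow_succ, ← Matrix.mul_assoc, mulVec_transpose]
        rfl
      rw [e]; exact h
  have hv := hobs (fun i => f fun j => if i = j then 1 else 0) (fun k => by
    funext i
    have h : f ((G * A ^ k) i) = 0 := hf (hmem k i)
    rw [LinearMap.pi_apply_eq_sum_univ] at h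
    simpa [mulVec, dotProduct] using h)
  apply hf0
  refine LinearMap.ext fun x => ?_
  rw [LinearMap.pi_apply_eq_sum_univ, LinearMap.zero_apply]
  refine Finset.sum_eq_zero fun i _ => ?_
  have h := congrFun hv i
  simp only [Pi.zero_apply] at h
  rw [h, smul_zero]

lemma quadForm_lyapunov {n p : ℕ} {A Qw P : Matrix (Fin n) (Fin n) ℝ}
    {C : Matrix (Fin p) (Fin n) ℝ} {Rv : Matrix (Fin p) (Fin p) ℝ} {L : Matrix (Fin n) (Fin p) ℝ}
    (h : P = ((1 - L * C) * A) * P * ((1 - L * C) * A)ᵀ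
              + ((1 - L * C) * Qw * (1 - L * C)ᵀ + L * Rv * Lᵀ)) (x : Fin n → ℝ) :
    quadForm P x = quadForm P (((1 - L * C) * A)ᵀ *ᵥ x)
      + (quadForm Qw ((1 - L * C)ᵀ *ᵥ x) + quadForm Rv (Lᵀ *ᵥ x)) := by
  conv_lhs => rw [h]
  simp only [quadForm_add_matrix, quadForm_conj]

lemma trace_eq_sum_quadForm {n p : ℕ} (A P : Matrix (Fin n) (Fin n) ℝ)
    (C : Matrix (Fin p) (Fin n) ℝ) :
    (C * A * P * Aᵀ * Cᵀ).trace = ∑ i, quadForm P ((C * A) i) := by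
  rw [Matrix.mul_assoc (C * A * P), ← transpose_mul]
  refine Finset.sum_congr rfl fun i _ => ?_
  rw [diag_apply, quadForm, dotProduct_mulVec]
  rfl

/-- If the innovations loss is bounded over `S`, then so are the forms of `P j`, `j ∈ S`,
relative to the norm. -/
lemma bounded_of_observable {n p : ℕ}
    {A : Matrix (Fin n) (Fin n) ℝ} {C : Matrix (Fin p) (Fin n) ℝ}
    {Qw : Matrix (Fin n) (Fin n) ℝ} (hQw : Qw.PosDef)
    {Rv : Matrix (Fin p) (Fin p) ℝ} (hRv : Rv.PosDef)
    (hobs : ∀ v : Fin n → ℝ, (∀ k : ℕ, (C * A * A ^ k).mulVec v = 0) → v = 0)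
    (L : ℕ → Matrix (Fin n) (Fin p) ℝ)
    (P : ℕ → Matrix (Fin n) (Fin n) ℝ)
    (hP : ∀ j, (P j).PosSemidef)
    (hlyap : ∀ j, P j = ((1 - L j * C) * A) * P j * ((1 - L j * C) * A)ᵀ
                        + ((1 - L j * C) * Qw * (1 - L j * C)ᵀ + L j * Rv * (L j)ᵀ))
    (S : Set ℕ) (T : ℝ) (hT : ∀ j ∈ S, (C * A * P j * Aᵀ * Cᵀ).trace ≤ T) :
    ∃ K, 0 < K ∧ ∀ j ∈ S, ∀ x, quadForm (P j) x ≤ K * ‖x‖ ^ 2 := by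
  have hrow : ∀ j ∈ S, ∀ i, quadForm (P j) ((C * A) i) ≤ T := by
    intro j hj i
    refine le_trans ?_ (hT j hj)
    rw [trace_eq_sum_quadForm]
    exact Finset.single_le_sum (f := fun i => quadForm (P j) ((C * A) i))
      (fun i _ => quadForm_nonneg (hP j) _) (Finset.mem_univ i)
  obtain ⟨r, hr, hrb⟩ := exists_lower_bound hRv
  have htop : boundedSubmodule P hP S = ⊤ := by
    refine eq_top_of_observable hobs _ (fun i => ⟨T, fun j hj => hrow j hj i⟩) ?_
    rintro x ⟨K, hK⟩
    refine ⟨2 * K + 2 * (2 ^ p * p * |T| * (K / r)), fun j hj => ?_⟩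
    have hl := quadForm_lyapunov (hlyap j) x
    have h1 := quadForm_nonneg hQw.posSemidef ((1 - L j * C)ᵀ *ᵥ x)
    have h2 := quadForm_nonneg hRv.posSemidef ((L j)ᵀ *ᵥ x)
    have h3 := quadForm_nonneg (hP j) (((1 - L j * C) * A)ᵀ *ᵥ x)
    have hy : ‖(L j)ᵀ *ᵥ x‖ ^ 2 ≤ K / r := by
      rw [le_div_iff₀ hr]
      linarith [hrb ((L j)ᵀ *ᵥ x), hK j hj]
    -- `Aᵀ x = Fᵀ x + ∑ i, (Lᵀ x) i • (row i of C A)`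
    have hdec : Aᵀ *ᵥ x = ((1 - L j * C) * A)ᵀ *ᵥ x
        + ∑ i, ((L j)ᵀ *ᵥ x) i • (C * A) i := by
      have e : ∑ i, ((L j)ᵀ *ᵥ x) i • (C * A) i = (C * A)ᵀ *ᵥ ((L j)ᵀ *ᵥ x) := by
        rw [mulVec_transpose (C * A), vecMul_eq_sum]
      rw [e, mulVec_mulVec, ← transpose_mul, ← add_mulVec, ← transpose_add]
      congr 2
      rw [Matrix.sub_mul, Matrix.one_mul, Matrix.mul_assoc, sub_add_cancel]
    have hc := quadForm_comb_le (hP j) (fun i => (C * A) i) ((L j)ᵀ *ᵥ x)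
      (fun i => (hrow j hj i).trans (le_abs_self T))
    have hc' : (2 : ℝ) ^ p * p * |T| * ‖(L j)ᵀ *ᵥ x‖ ^ 2 ≤ 2 ^ p * p * |T| * (K / r) := by
      gcongr
    rw [hdec]
    have := quadForm_add_le (hP j) (((1 - L j * C) * A)ᵀ *ᵥ x)
      (∑ i, ((L j)ᵀ *ᵥ x) i • (C * A) i)
    linarith [hK j hj]
  have hbasis : ∀ i : Fin n, ∃ K, ∀ j ∈ S, quadForm (P j) (Pi.single i 1) ≤ K := by
    intro i
    have : (Pi.single i 1 : Fin n → ℝ) ∈ boundedSubmodule P hP S := htop ▸ Submodule.mem_top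
    exact this
  choose κ hκ using hbasis
  set M := ∑ i, |κ i| with hM
  have hM0 : 0 ≤ M := Finset.sum_nonneg fun i _ => abs_nonneg _
  refine ⟨2 ^ n * n * M + 1, by positivity, fun j hj x => ?_⟩
  have hc := quadForm_comb_le (hP j) (fun i => Pi.single i (1 : ℝ)) x (K := M) (fun i =>
    ((hκ i j hj).trans (le_abs_self _)).trans
      (Finset.single_le_sum (f := fun i => |κ i|) (fun i _ => abs_nonneg _) (Finset.mem_univ i)))
  rw [← pi_eq_sum_univ' x] at hc
  nlinarith [sq_nonneg ‖x‖]

/-- **Coercivity of the innovations loss (Expanded Coercivity Lemma, part 2).**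
Assume `(A, C A)` is observable.  Let `L j` be gains for which every complex eigenvalue of
`F(L_j) = (I − L_j C) A` has modulus `< 1`, and let `P j` be symmetric PSD solutions of
`P_j = F(L_j) P_j F(L_j)ᵀ + Q_η(L_j)`.  If `‖L_j‖_F → ∞` or the spectral radius of
`F(L_j)` tends to `1`, then
`J_innov(L_j) = Tr(C A P_j Aᵀ Cᵀ) + Tr(C Q_w Cᵀ) + Tr(R_v) → ∞`. -/
theorem coercivity_innovations_loss {n p : ℕ}
    (A : Matrix (Fin n) (Fin n) ℝ) (C : Matrix (Fin p) (Fin n) ℝ)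
    (Qw : Matrix (Fin n) (Fin n) ℝ) (hQw : Qw.PosDef)
    (Rv : Matrix (Fin p) (Fin p) ℝ) (hRv : Rv.PosDef)
    (hobs : ∀ v : Fin n → ℝ, (∀ k : ℕ, (C * A * A ^ k).mulVec v = 0) → v = 0)
    (L : ℕ → Matrix (Fin n) (Fin p) ℝ)
    (P : ℕ → Matrix (Fin n) (Fin n) ℝ)
    (hstab : ∀ j, ∀ μ ∈ spectrum ℂ (((1 - L j * C) * A).map (fun x => (x : ℂ))), ‖μ‖ < 1)
    (hP : ∀ j, (P j).PosSemidef)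
    (hlyap : ∀ j, P j = ((1 - L j * C) * A) * P j * ((1 - L j * C) * A)ᵀ
                        + ((1 - L j * C) * Qw * (1 - L j * C)ᵀ + L j * Rv * (L j)ᵀ))
    (hblow : Tendsto (fun j => frobNorm (L j)) atTop atTop
      ∨ Tendsto (fun j => spectralRadius ℂ (((1 - L j * C) * A).map (fun x => (x : ℂ))))
          atTop (nhds 1)) :
    Tendsto (fun j => (C * A * P j * Aᵀ * Cᵀ).trace + (C * Qw * Cᵀ).trace + Rv.trace)
      atTop atTop := by
  by_contra hnot
  rw [tendsto_atTop] at hnot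
  push Not at hnot
  obtain ⟨M, hfreq⟩ := hnot
  set S : Set ℕ := {j | (C * A * P j * Aᵀ * Cᵀ).trace + (C * Qw * Cᵀ).trace + Rv.trace < M}
    with hS
  obtain ⟨K, hK, hPK⟩ := bounded_of_observable hQw hRv hobs L P hP hlyap S
    (M - (C * Qw * Cᵀ).trace - Rv.trace) (fun j hj => by
      have : (C * A * P j * Aᵀ * Cᵀ).trace + (C * Qw * Cᵀ).trace + Rv.trace < M := hj
      linarith)
  rcases hblow with hL | hρ
  · obtain ⟨r, hr, hrb⟩ := exists_lower_bound hRv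
    obtain ⟨j, hj, hjL⟩ := (hfreq.and_eventually
      (hL.eventually_gt_atTop (Real.sqrt (∑ _i : Fin n, ∑ _k : Fin p, K / r)))).exists
    refine absurd hjL (not_lt.2 (Real.sqrt_le_sqrt ?_))
    refine Finset.sum_le_sum fun i _ => Finset.sum_le_sum fun k _ => ?_
    -- Row `i` of `L j` is `(L j)ᵀ` applied to the `i`-th basis vector, which has norm `1`.
    have hl := quadForm_lyapunov (hlyap j) (Pi.single i 1)
    have h1 := quadForm_nonneg hQw.posSemidef ((1 - L j * C)ᵀ *ᵥ Pi.single i 1)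
    have h3 := quadForm_nonneg (hP j) (((1 - L j * C) * A)ᵀ *ᵥ Pi.single i 1)
    have h4 := hPK j hj (Pi.single i 1)
    have h5 := hrb ((L j)ᵀ *ᵥ Pi.single i 1)
    have h6 : |L j i k| ≤ ‖(L j)ᵀ *ᵥ Pi.single i 1‖ := by
      have := norm_le_pi_norm ((L j)ᵀ *ᵥ Pi.single i 1) k
      simpa using this
    have h7 := pow_le_pow_left₀ (abs_nonneg _) h6 2
    rw [sq_abs] at h7
    have h8 : ‖(Pi.single i 1 : Fin n → ℝ)‖ = 1 := by simp [Pi.norm_single]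
    rw [h8] at h4
    rw [le_div_iff₀ hr]
    nlinarith
  · obtain ⟨c, hc, hcb⟩ := exists_noise_lower_bound C hQw hRv
    have hlt : ENNReal.ofReal (Real.sqrt (1 - c / K)) < 1 := by
      rw [ENNReal.ofReal_lt_one, Real.sqrt_lt' one_pos]
      have : 0 < c / K := by positivity
      linarith
    obtain ⟨j, hj, hjρ⟩ := (hfreq.and_eventually (hρ.eventually_const_lt hlt)).exists
    refine absurd hjρ (not_lt.2 (iSup₂_le fun μ hμ => ?_))
    have h := norm_sq_le_of_mem_spectrum hK _ (hcb (L j)) (quadForm_lyapunov (hlyap j))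
      (hPK j hj) hc (hP j) hμ
    rw [← enorm_eq_nnnorm, ← ofReal_norm]
    exact ENNReal.ofReal_le_ofReal (Real.le_sqrt_of_sq_le h)
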